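/- Let M ≥ 0, let u ∈ D_M with Δu = f, and let v be continuous on Σ_N^+ with finite energy (v ∈ dom E). Then E(u,v) = Σ_{p ∈ V_M} v(p) (du)(p) − ∫_{Σ_N^+} f v dμ. -/

import Mathlib

open Filter Topology MeasureTheory Finset Classical

noncomputable section

/-- The one-sided full shift space `Σ_N^+` on `N` symbols; coordinates are indexed
from `0`, so the paper's `x_1 x_2 ⋯` is `x 0, x 1, ⋯` here. It carries the product
of the discrete topology on `Fin N`. -/
abbrev SSp (N : ℕ) : Type := ℕ → Fin N

/-- The level-`m` vertex set `V_m = {p : p_i = p_{i+1} for all i ≥ m+1}` (1-based),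
i.e. the sequences that are constant from (0-based) coordinate `m` on.  It is
realized as a `Finset` via the parametrization by the first `m+1` coordinates;
see `mem_V` for the defining property. -/
noncomputable def V (N m : ℕ) : Finset (SSp N) :=
  (Finset.univ : Finset (Fin (m + 1) → Fin N)).image
    (fun w j => w ⟨min j m, by omega⟩)

lemma const_from (N m : ℕ) (p : SSp N) (h : ∀ i, m ≤ i → p i = p (i + 1)) :
    ∀ j, m ≤ j → p j = p m := by
  intro j hj
  induction j with
  | zero => have : m = 0 := by omega
            simp [this]
  | succ k ih =>
      rcases Nat.lt_or_ge k m with hk | hk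
      · have : m = k + 1 := by omega
        simp [this]
      · rw [← h k hk]
        exact ih hk

/-- Membership in `V N m` is exactly the paper's condition
`p_i = p_{i+1}` for all `i ≥ m+1` (1-based), i.e. `p i = p (i+1)` for all `i ≥ m`. -/
lemma mem_V {N m : ℕ} {p : SSp N} :
    p ∈ V N m ↔ ∀ i, m ≤ i → p i = p (i + 1) := by
  classical
  constructor
  · intro hp i hi
    simp only [V, Finset.mem_image] at hp
    obtain ⟨w, -, rfl⟩ := hp
    have h1 : min i m = m := by omega
    have h2 : min (i + 1) m = m := by omega
    simp [h1, h2]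
  · intro h
    simp only [V, Finset.mem_image]
    refine ⟨fun j => p j, Finset.mem_univ _, ?_⟩
    funext j
    rcases Nat.lt_or_ge j m with hj | hj
    · have : min j m = j := by omega
      simp [this]
    · have : min j m = m := by omega
      simp only [this]
      exact (const_from N m p h j hj).symm

/-- The deleted neighbourhood `U_{p,m} = {q ∈ V_m : q ≠ p, q_i = p_i for 1 ≤ i ≤ m}`
(1-based), i.e. `q` agrees with `p` on the first `m` (0-based: `i < m`) coordinates. -/
noncomputable def U (N m : ℕ) (p : SSp N) : Finset (SSp N) :=
  (V N m).filter (fun q => q ≠ p ∧ ∀ i, i < m → q i = p i)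

/-- `κ_p = min {j : p ∈ V_j}`. -/
noncomputable def kappa (N : ℕ) (p : SSp N) : ℕ := sInf {j | p ∈ V N j}

/-- The difference operator
`H_m u (p) = Σ_{i = κ_p}^{m} Σ_{q ∈ U_{p,i}} (u(q) − u(p))`. -/
noncomputable def H (N m : ℕ) (u : SSp N → ℝ) (p : SSp N) : ℝ :=
  ∑ i ∈ Finset.Icc (kappa N p) m, ∑ q ∈ U N i p, (u q - u p)

/-- The Dirichlet form `E_{H_m}(u, v) = − Σ_{p ∈ V_m} u(p) · H_m v(p)`. -/
noncomputable def EH (N m : ℕ) (u v : SSp N → ℝ) : ℝ :=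
  -∑ p ∈ V N m, u p * H N m v p

/-- The cylinder set `[p_1 ⋯ p_m]`, determined by the first `m` coordinates of `p`. -/
def cyl (N m : ℕ) (p : SSp N) : Set (SSp N) := {x | ∀ i, i < m → x i = p i}

/-- `χ_p^m` : the indicator function of the cylinder set `[p_1 ⋯ p_{m+1}]`. -/
noncomputable def chi (N m : ℕ) (p : SSp N) : SSp N → ℝ :=
  (cyl N (m + 1) p).indicator 1

/-- `u ∈ dom E`: `u` is continuous and the energy
`E(u) = lim_m E_{H_m}(u|_{V_m})` exists (and is finite). -/
def MemDomE (N : ℕ) (u : SSp N → ℝ) : Prop :=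
  Continuous u ∧ ∃ L : ℝ, Tendsto (fun m => EH N m u u) atTop (nhds L)

/-- `v ∈ dom_M E`: `v` has finite energy and vanishes on the boundary `V_M`. -/
def MemDomME (N M : ℕ) (v : SSp N → ℝ) : Prop :=
  MemDomE N v ∧ ∀ p ∈ V N M, v p = 0

/-- `u ∈ 𝒟_M` with `Δ u = f` (strong formulation with boundary `V_M`):
`u` and `f` are continuous and
`lim_{m → ∞} max_{p ∈ V_m ∖ V_M} |N^{m+1} H_m u(p) − f(p)| = 0`. -/
def IsLaplacianOn (N M : ℕ) (u f : SSp N → ℝ) : Prop :=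
  Continuous u ∧ Continuous f ∧
    ∀ ε : ℝ, 0 < ε → ∃ m₀ : ℕ, ∀ m, m₀ ≤ m → ∀ p ∈ V N m, p ∉ V N M →
      |(N : ℝ) ^ (m + 1) * H N m u p - f p| < ε

/-- `u ∈ D_μ` with `Δ u = f` (original definition of the Laplacian):
`u` and `f` are continuous and
`lim_{m → ∞} max_{p ∈ V_m ∖ V_{m−1}} |N^{m+1} H_m u(p) − f(p)| = 0`
(the level is written `m+1` to avoid natural subtraction). -/
def IsLaplacianDmu (N : ℕ) (u f : SSp N → ℝ) : Prop :=
  Continuous u ∧ Continuous f ∧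
    ∀ ε : ℝ, 0 < ε → ∃ m₀ : ℕ, ∀ m, m₀ ≤ m → ∀ p ∈ V N (m + 1), p ∉ V N m →
      |(N : ℝ) ^ (m + 2) * H N (m + 1) u p - f p| < ε

/-- `μ` is the equidistributed Bernoulli measure:
`μ([p_1 ⋯ p_m]) = N^{−m}` for every cylinder set. -/
def IsBernoulli (N : ℕ) (μ : Measure (SSp N)) : Prop :=
  ∀ (m : ℕ) (p : SSp N), μ (cyl N m p) = (N : ENNReal)⁻¹ ^ m

/-- `ρ(x,y) = min {i : x_i ≠ y_i}` (1-based; `0`-based first disagreement plus one). -/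
noncomputable def rho (N : ℕ) (x y : SSp N) : ℕ := sInf {i | x i ≠ y i} + 1

/-- The matrix `(G_m)_{pq}`: `2/N` if `q = p`, `1/N` if `q ∈ U_{p,m}`, `0` otherwise. -/
noncomputable def Gmat (N m : ℕ) (p q : SSp N) : ℝ :=
  if q = p then 2 / N else if q ∈ U N m p then 1 / N else 0

/-- The Green's function
`g(x,y) = Σ_{m=1}^{ρ(x,y)−1} Σ_{r,s ∈ V_m ∖ V_{m−1}} (G_m)_{rs} χ_r^m(x) χ_s^m(y)`
for `ρ(x,y) > 1`, and `g(x,y) = 0` for `ρ(x,y) = 1` (the sum is then empty). -/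
noncomputable def greenFn (N : ℕ) (x y : SSp N) : ℝ :=
  ∑ m ∈ Finset.Icc 1 (rho N x y - 1),
    ∑ r ∈ (V N m).filter (fun r => r ∉ V N (m - 1)),
      ∑ s ∈ (V N m).filter (fun s => s ∉ V N (m - 1)),
        Gmat N m r s * chi N m r x * chi N m s y

/-- The Green's operator `G_μ f (x) = ∫_{Σ_N^+ ∖ {x}} g(x,y) f(y) dμ(y)`. -/
noncomputable def Gop (N : ℕ) (μ : Measure (SSp N)) (f : SSp N → ℝ) (x : SSp N) : ℝ :=
  ∫ y in ({x}ᶜ : Set (SSp N)), greenFn N x y * f y ∂μ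


lemma V_mono {N k m : ℕ} (h : k ≤ m) : V N k ⊆ V N m := fun _ hp =>
  mem_V.2 fun i hi => mem_V.1 hp i (h.trans hi)

lemma kappa_le {N i : ℕ} {p : SSp N} (h : p ∈ V N i) : kappa N p ≤ i := Nat.sInf_le h

lemma mem_V_of_kappa_le {N m i : ℕ} {p : SSp N} (hp : p ∈ V N m) (h : kappa N p ≤ i) :
    p ∈ V N i :=
  V_mono h (Nat.sInf_mem (s := {j | p ∈ V N j}) ⟨m, hp⟩)

lemma eq_of_mem_V {N m : ℕ} {p q : SSp N} (hp : p ∈ V N m) (hq : q ∈ V N m)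
    (h : ∀ i, i < m + 1 → q i = p i) : q = p := by
  funext j
  rcases Nat.lt_or_ge j (m + 1) with hj | hj
  · exact h j hj
  · rw [const_from N m p (mem_V.1 hp) j (by omega), const_from N m q (mem_V.1 hq) j (by omega)]
    exact h m (by omega)

/-- The number of levels `i ≤ m` at which `p` and `q` are neighbours. -/
def conductance (N m : ℕ) (p q : SSp N) : ℝ :=
  ∑ i ∈ Finset.range (m + 1),
    if p ∈ V N i ∧ q ∈ V N i ∧ q ≠ p ∧ ∀ j, j < i → q j = p j then 1 else 0

lemma conductance_comm (N m : ℕ) (p q : SSp N) : conductance N m p q = conductance N m q p := by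
  unfold conductance
  refine Finset.sum_congr rfl fun i _ => if_congr ?_ rfl rfl
  constructor <;> rintro ⟨h1, h2, h3, h4⟩ <;>
    exact ⟨h2, h1, h3.symm, fun j hj => (h4 j hj).symm⟩

lemma H_eq_sum_conductance {N m : ℕ} {p : SSp N} (hp : p ∈ V N m) (u : SSp N → ℝ) :
    H N m u p = ∑ q ∈ V N m, conductance N m p q * (u q - u p) := by
  simp only [conductance, Finset.sum_mul]
  rw [Finset.sum_comm]
  have hsub : Finset.Icc (kappa N p) m ⊆ Finset.range (m + 1) := fun i hi => by
    simp only [Finset.mem_Icc, Finset.mem_range] at *; omega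
  rw [H, ← Finset.sum_subset hsub]
  · refine Finset.sum_congr rfl fun i hi => ?_
    rw [Finset.mem_Icc] at hi
    have hpi := mem_V_of_kappa_le hp hi.1
    simp only [ite_mul, one_mul, zero_mul]
    rw [← Finset.sum_filter]
    refine Finset.sum_congr ?_ fun _ _ => rfl
    ext q
    simp only [U, Finset.mem_filter]
    exact ⟨fun h => ⟨V_mono hi.2 h.1, hpi, h.1, h.2⟩, fun h => ⟨h.2.2.1, h.2.2.2⟩⟩
  · intro i hi hi'
    refine Finset.sum_eq_zero fun q _ => ?_
    rw [if_neg, zero_mul]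
    rintro ⟨h, -⟩
    exact hi' (Finset.mem_Icc.2 ⟨kappa_le h, by simpa [Nat.lt_succ_iff] using hi⟩)

/-- The difference operator `H_m` is symmetric. -/
lemma sum_mul_H_comm (N m : ℕ) (u v : SSp N → ℝ) :
    ∑ p ∈ V N m, u p * H N m v p = ∑ p ∈ V N m, v p * H N m u p := by
  have key : ∀ u v : SSp N → ℝ, ∑ p ∈ V N m, u p * H N m v p =
      ∑ p ∈ V N m, ∑ q ∈ V N m, conductance N m p q * (u p * v q) -
        ∑ p ∈ V N m, ∑ q ∈ V N m, conductance N m p q * (u p * v p) := by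
    intro u v
    rw [← Finset.sum_sub_distrib]
    refine Finset.sum_congr rfl fun p hp => ?_
    rw [H_eq_sum_conductance hp, Finset.mul_sum, ← Finset.sum_sub_distrib]
    exact Finset.sum_congr rfl fun q _ => by ring
  rw [key u v, key v u, Finset.sum_comm]
  congr 1
  · refine Finset.sum_congr rfl fun p _ => Finset.sum_congr rfl fun q _ => ?_
    rw [conductance_comm]; ring
  · exact Finset.sum_congr rfl fun p _ => Finset.sum_congr rfl fun q _ => by ring

lemma chi_eq_of_agree {N M : ℕ} (p : SSp N) {x y : SSp N} (h : ∀ i, i < M + 1 → x i = y i) :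
    chi N M p x = chi N M p y := by
  have : x ∈ cyl N (M + 1) p ↔ y ∈ cyl N (M + 1) p :=
    ⟨fun hx i hi => (h i hi).symm.trans (hx i hi), fun hy i hi => (h i hi).trans (hy i hi)⟩
  by_cases hx : x ∈ cyl N (M + 1) p
  · simp [chi, hx, this.1 hx]
  · simp [chi, hx, mt this.2 hx]

lemma sum_U_chi_eq_zero {N M i : ℕ} (hi : M < i) (p q : SSp N) :
    ∑ r ∈ U N i q, (chi N M p r - chi N M p q) = 0 := by
  refine Finset.sum_eq_zero fun r hr => sub_eq_zero.2 (chi_eq_of_agree p fun j hj => ?_)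
  exact (Finset.mem_filter.1 hr).2.2 j (by omega)

lemma H_chi_of_notMem {N M m : ℕ} (p : SSp N) {q : SSp N} (hm : q ∈ V N m) (hq : q ∉ V N M) :
    H N m (chi N M p) q = 0 := by
  refine Finset.sum_eq_zero fun i hi => sum_U_chi_eq_zero ?_ p q
  by_contra h
  exact hq (mem_V_of_kappa_le hm ((Finset.mem_Icc.1 hi).1.trans (not_lt.1 h)))

lemma H_chi_of_le {N M m : ℕ} (hM : M ≤ m) (p q : SSp N) :
    H N m (chi N M p) q = H N M (chi N M p) q := by
  refine (Finset.sum_subset (Finset.Icc_subset_Icc_right hM) fun i hi hi' => ?_).symm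
  refine sum_U_chi_eq_zero ?_ p q
  simp only [Finset.mem_Icc] at hi hi'
  omega

/-- Pairing with the indicator of a level-`M` cylinder does not depend on the level. -/
lemma sum_chi_mul_H {N M m : ℕ} (hM : M ≤ m) (u : SSp N → ℝ) (p : SSp N) :
    ∑ q ∈ V N m, chi N M p q * H N m u q = ∑ q ∈ V N M, chi N M p q * H N M u q := by
  rw [sum_mul_H_comm, sum_mul_H_comm N M, ← Finset.sum_subset (V_mono hM)]
  · exact Finset.sum_congr rfl fun q _ => by rw [H_chi_of_le hM]
  · exact fun q hm hq => by rw [H_chi_of_notMem p hm hq, mul_zero]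

lemma isClopen_cyl (N m : ℕ) (p : SSp N) : IsClopen (cyl N m p) := by
  have : cyl N m p = ⋂ i ∈ Finset.range m, (fun x : SSp N => x i) ⁻¹' {p i} := by
    ext x; simp [cyl]
  rw [this]
  exact isClopen_biInter_finset fun i _ => (isClopen_discrete {p i}).preimage (continuous_apply i)

lemma continuous_chi (N M : ℕ) (p : SSp N) : Continuous (chi N M p) :=
  (isClopen_cyl N (M + 1) p).continuous_indicator continuous_const

/-- Freeze a sequence from coordinate `m` on. -/
def freeze (N m : ℕ) (x : SSp N) : SSp N := fun j => x (min j m)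

lemma freeze_mem_V (N m : ℕ) (x : SSp N) : freeze N m x ∈ V N m :=
  mem_V.2 fun i hi => by simp [freeze, hi, Nat.le_succ_of_le hi]

lemma tendsto_freeze (N : ℕ) (x : SSp N) : Tendsto (fun m => freeze N m x) atTop (nhds x) := by
  refine tendsto_pi_nhds.2 fun j => tendsto_const_nhds.congr' ?_
  filter_upwards [eventually_ge_atTop j] with m hm
  simp [freeze, hm]

lemma mem_cyl_iff_freeze {N m : ℕ} {p : SSp N} (hp : p ∈ V N m) (x : SSp N) :
    x ∈ cyl N (m + 1) p ↔ freeze N m x = p := by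
  constructor
  · intro h
    refine eq_of_mem_V hp (freeze_mem_V N m x) fun i hi => ?_
    rw [← h i hi, freeze, min_eq_left (by omega)]
  · rintro rfl i hi
    rw [freeze, min_eq_left (by omega)]

lemma comp_freeze_eq_sum (N m : ℕ) (g : SSp N → ℝ) (x : SSp N) :
    g (freeze N m x) = ∑ p ∈ V N m, (cyl N (m + 1) p).indicator (fun _ => g p) x := by
  rw [Finset.sum_eq_single_of_mem _ (freeze_mem_V N m x)]
  · rw [Set.indicator_of_mem ((mem_cyl_iff_freeze (freeze_mem_V N m x) x).2 rfl)]
  · intro p hp hne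
    rw [Set.indicator_of_notMem]
    exact fun h => hne ((mem_cyl_iff_freeze hp x).1 h).symm

lemma integral_comp_freeze {N : ℕ} {μ : Measure (SSp N)} [IsProbabilityMeasure μ]
    (hμ : IsBernoulli N μ) (m : ℕ) (g : SSp N → ℝ) :
    ∫ x, g (freeze N m x) ∂μ = ((N : ℝ) ^ (m + 1))⁻¹ * ∑ p ∈ V N m, g p := by
  simp only [comp_freeze_eq_sum]
  rw [integral_finsetSum, Finset.mul_sum]
  · refine Finset.sum_congr rfl fun p _ => ?_
    rw [integral_indicator_const _ (isClopen_cyl N _ p).isOpen.measurableSet, measureReal_def, hμ]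
    simp
  · exact fun p _ => (integrable_const _).indicator (isClopen_cyl N _ p).isOpen.measurableSet

lemma tendsto_average {N : ℕ} {μ : Measure (SSp N)} [IsProbabilityMeasure μ]
    (hμ : IsBernoulli N μ) {g : SSp N → ℝ} (hg : Continuous g) :
    Tendsto (fun m => ((N : ℝ) ^ (m + 1))⁻¹ * ∑ p ∈ V N m, g p) atTop (nhds (∫ x, g x ∂μ)) := by
  obtain ⟨C, hC⟩ := isCompact_univ.exists_bound_of_continuousOn hg.continuousOn
  simp only [← integral_comp_freeze hμ]
  refine tendsto_integral_of_dominated_convergence (fun _ => C) (fun m => ?_)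
    (integrable_const C) (fun m => ae_of_all _ fun x => hC _ (Set.mem_univ _))
    (ae_of_all _ fun x => (hg.tendsto x).comp (tendsto_freeze N x))
  refine (hg.comp (continuous_pi fun j => continuous_apply (min j m))).aestronglyMeasurable

lemma card_V_le (N m : ℕ) : #(V N m) ≤ N ^ (m + 1) := by
  refine Finset.card_image_le.trans ?_
  simp

/-- Away from the boundary, the pairing of `H_m u` with `w` converges to `∫ (Δu) w`. -/
lemma tendsto_sum_interior {N : ℕ} (hN : 2 ≤ N) {μ : Measure (SSp N)} [IsProbabilityMeasure μ]
    (hμ : IsBernoulli N μ) {M : ℕ} {u f : SSp N → ℝ} (huf : IsLaplacianOn N M u f)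
    {w : SSp N → ℝ} (hw : Continuous w) :
    Tendsto (fun m => ∑ p ∈ V N m \ V N M, w p * H N m u p) atTop
      (nhds (∫ x, f x * w x ∂μ)) := by
  obtain ⟨-, hf, hlim⟩ := huf
  obtain ⟨C, hC⟩ := isCompact_univ.exists_bound_of_continuousOn hw.continuousOn
  have hC' : ∀ x, |w x| ≤ C := fun x => hC x (Set.mem_univ x)
  have hC0 : 0 ≤ C := (abs_nonneg _).trans (hC' fun _ => ⟨0, by omega⟩)
  have hNpos : ∀ m, 0 < (N : ℝ) ^ (m + 1) := fun m => by
    have : (0 : ℝ) < N := by exact_mod_cast (by omega : 0 < N)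
    positivity
  have hinv : Tendsto (fun m : ℕ => ((N : ℝ) ^ (m + 1))⁻¹) atTop (nhds 0) := by
    have h1 : (1 : ℝ) < N := by exact_mod_cast (by omega : 1 < N)
    exact ((tendsto_pow_atTop_atTop_of_one_lt h1).comp (tendsto_add_atTop_nat 1)).inv_tendsto_atTop
  have hmain : Tendsto (fun m => ((N : ℝ) ^ (m + 1))⁻¹ * ∑ p ∈ V N m, f p * w p -
      ((N : ℝ) ^ (m + 1))⁻¹ * ∑ p ∈ V N M, f p * w p) atTop (nhds (∫ x, f x * w x ∂μ)) := by
    simpa using (tendsto_average hμ (hf.mul hw)).sub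
      (hinv.mul_const (∑ p ∈ V N M, f p * w p))
  have herr : Tendsto (fun m => ∑ p ∈ V N m \ V N M,
      ((N : ℝ) ^ (m + 1))⁻¹ * (w p * ((N : ℝ) ^ (m + 1) * H N m u p - f p))) atTop (nhds 0) := by
    refine Metric.tendsto_atTop.2 fun ε hε => ?_
    obtain ⟨m₀, hm₀⟩ := hlim (ε / (C + 1)) (by positivity)
    refine ⟨m₀, fun m hm => ?_⟩
    rw [Real.dist_eq, sub_zero]
    have hle : ∀ p ∈ V N m \ V N M,
        |((N : ℝ) ^ (m + 1))⁻¹ * (w p * ((N : ℝ) ^ (m + 1) * H N m u p - f p))| ≤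
          ((N : ℝ) ^ (m + 1))⁻¹ * (C * (ε / (C + 1))) := fun p hp => by
      rw [Finset.mem_sdiff] at hp
      rw [abs_mul, abs_mul, abs_of_pos (inv_pos.2 (hNpos m))]
      have := hNpos m
      gcongr
      · exact hC' p
      · exact (hm₀ m hm p hp.1 hp.2).le
    have hcard : (#(V N m \ V N M) : ℝ) ≤ (N : ℝ) ^ (m + 1) := by
      exact_mod_cast (Finset.card_le_card Finset.sdiff_subset).trans (card_V_le N m)
    calc _ ≤ _ := Finset.abs_sum_le_sum_abs _ _
      _ ≤ #(V N m \ V N M) • (((N : ℝ) ^ (m + 1))⁻¹ * (C * (ε / (C + 1)))) :=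
        Finset.sum_le_card_nsmul _ _ _ hle
      _ ≤ (N : ℝ) ^ (m + 1) * (((N : ℝ) ^ (m + 1))⁻¹ * (C * (ε / (C + 1)))) := by
        rw [nsmul_eq_mul]
        have := hNpos m
        gcongr
      _ = C * (ε / (C + 1)) := mul_inv_cancel_left₀ (hNpos m).ne' _
      _ < ε := by
        rw [mul_div_assoc', div_lt_iff₀ (by positivity)]
        nlinarith
  have hsum := hmain.add herr
  rw [add_zero] at hsum
  refine hsum.congr' ?_
  filter_upwards [eventually_ge_atTop M] with m hm
  rw [← mul_sub, ← Finset.sum_sdiff (V_mono hm), add_sub_cancel_right, Finset.mul_sum,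
    ← Finset.sum_add_distrib]
  refine Finset.sum_congr rfl fun p _ => ?_
  have := (hNpos m).ne'
  field_simp
  ring

/-- Existence of the Neumann derivatives at the boundary points. -/
lemma tendsto_neg_H {N : ℕ} (hN : 2 ≤ N) {μ : Measure (SSp N)} [IsProbabilityMeasure μ]
    (hμ : IsBernoulli N μ) {M : ℕ} {u f : SSp N → ℝ} (huf : IsLaplacianOn N M u f)
    {p : SSp N} (hp : p ∈ V N M) :
    Tendsto (fun m => -(H N m u p)) atTop
      (nhds (∫ x, f x * chi N M p x ∂μ - ∑ q ∈ V N M, chi N M p q * H N M u q)) := by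
  refine ((tendsto_sum_interior hN hμ huf (continuous_chi N M p)).sub_const _).congr' ?_
  filter_upwards [eventually_ge_atTop M] with m hm
  rw [← sum_chi_mul_H hm, ← Finset.sum_sdiff (V_mono hm), sub_add_cancel_left]
  congr 1
  rw [Finset.sum_eq_single_of_mem p hp]
  · simp [chi, cyl]
  · intro q hq hne
    have : q ∉ cyl N (M + 1) p := fun h => hne (eq_of_mem_V hp hq h)
    simp [chi, this]

/-- for `u ∈ 𝒟_M` with `Δu = f` and `v ∈ dom E`,
`E(u,v) = Σ_{p ∈ V_M} v(p)(du)(p) − ∫ f v dμ`, where `(du)(p) = lim_m (−H_m u(p))`. -/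
theorem statement12 (N : ℕ) (hN : 2 ≤ N)
    (μ : Measure (SSp N)) [IsProbabilityMeasure μ] (hμ : IsBernoulli N μ)
    (M : ℕ) (u f : SSp N → ℝ) (huf : IsLaplacianOn N M u f)
    (v : SSp N → ℝ) (hv : MemDomE N v) :
    ∃ du : SSp N → ℝ,
      (∀ p ∈ V N M, Tendsto (fun m => -(H N m u p)) atTop (nhds (du p))) ∧
      Tendsto (fun m => EH N m u v) atTop
        (nhds (∑ p ∈ V N M, v p * du p - ∫ x, f x * v x ∂μ)) := by
  refine ⟨fun p => ∫ x, f x * chi N M p x ∂μ - ∑ q ∈ V N M, chi N M p q * H N M u q,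
    fun p hp => tendsto_neg_H hN hμ huf hp, ?_⟩
  refine ((tendsto_finsetSum _ fun p hp => (tendsto_neg_H hN hμ huf hp).const_mul (v p)).sub
    (tendsto_sum_interior hN hμ huf hv.1)).congr' ?_
  filter_upwards [eventually_ge_atTop M] with m hm
  rw [EH, sum_mul_H_comm, ← Finset.sum_sdiff (V_mono hm), neg_add_rev,
    ← Finset.sum_neg_distrib, sub_eq_add_neg]
  simp only [mul_neg]
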